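/- arXiv:1802.08905 — 4 statements merged into one kernel-verified Lean document; each statement's English description precedes it below -/
import Mathlib

section
/- Let f : ℂ → ℂ be holomorphic and nowhere vanishing on the punctured open unit disk D \ {0}. Then there exists a holomorphic function g on D \ {0} such that g(w)² = f(w²) for all w ∈ D \ {0}. -/
open Metric

lemma aux_lift (F : ℂ → ℂ) (hF : DifferentiableOn ℂ F {u : ℂ | u.re < 0})
    (h0 : ∀ u : ℂ, u.re < 0 → F u ≠ 0) :
    ∃ L : ℂ → ℂ, (∀ u : ℂ, u.re < 0 → DifferentiableAt ℂ L u) ∧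
      ∀ u : ℂ, u.re < 0 → Complex.exp (L u) = F u := by
  have hO : IsOpen {u : ℂ | u.re < 0} := isOpen_lt Complex.continuous_re continuous_const
  have hC : Convex ℝ {u : ℂ | u.re < 0} := convex_halfSpace_re_lt 0
  have hm : (-1 : ℂ) ∈ {u : ℂ | u.re < 0} := by simp
  have : ContractibleSpace {u : ℂ | u.re < 0} := hC.contractibleSpace ⟨-1, hm⟩
  have : LocallyPathConnectedSpace {u : ℂ | u.re < 0} := hO.locallyPathConnectedSpace
  obtain ⟨Λ, ⟨-, hΛ⟩, -⟩ := Complex.isCoveringMapOn_exp.existsUnique_continuousMap_lifts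
    (⟨_, hF.continuousOn.domRestrict⟩ : C({u : ℂ | u.re < 0}, ℂ)) (a₀ := ⟨-1, hm⟩)
    (e₀ := Complex.log (F (-1))) (by simpa using Complex.exp_log (h0 (-1) hm))
    (fun a => by simpa using h0 a a.2)
  classical
  let L : ℂ → ℂ := fun u => if h : u.re < 0 then Λ ⟨u, h⟩ else 0
  have hL : ∀ u : ℂ, u.re < 0 → Complex.exp (L u) = F u := by
    intro u hu
    have := congrFun hΛ ⟨u, hu⟩
    simpa [L, hu] using this
  have hcont : ContinuousOn L {u : ℂ | u.re < 0} := by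
    rw [continuousOn_iff_continuous_domRestrict]
    convert Λ.continuous using 1
    ext ⟨u, hu⟩
    have hu' : u.re < 0 := hu
    simp [L, hu']
  refine ⟨L, fun u hu => ?_, hL⟩
  have hnu := hO.mem_nhds hu
  have hca := hcont.continuousAt hnu
  have hdF := (hF u hu).differentiableAt hnu
  have hd : DifferentiableAt ℂ (fun v => L u + Complex.log (F v / F u)) u := by
    refine (DifferentiableAt.clog (hdF.div_const _) ?_).const_add _
    rw [div_self (h0 u hu)]
    simp
  refine hd.congr_of_eventuallyEq ?_
  have him : ContinuousAt (fun v => (L v - L u).im) u :=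
    Complex.continuous_im.continuousAt.comp (hca.sub continuousAt_const)
  have h1 : ∀ᶠ v in nhds u, (L v - L u).im ∈ Set.Ioo (-Real.pi) Real.pi :=
    him.eventually_mem (Ioo_mem_nhds (by simpa using Real.pi_pos) (by simpa using Real.pi_pos))
  filter_upwards [h1, hnu] with v hv hv0
  rw [← hL v hv0, ← hL u hu, ← Complex.exp_sub, Complex.log_exp hv.1 hv.2.le]
  ring

/-- A nowhere-vanishing holomorphic function on the punctured unit disk admits a
holomorphic square root after pulling back along the double cover `w ↦ w²`. -/
theorem exists_sqrt_on_double_cover (f : ℂ → ℂ)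
    (hf : DifferentiableOn ℂ f (ball (0 : ℂ) 1 \ {0}))
    (hne : ∀ z ∈ ball (0 : ℂ) 1 \ {0}, f z ≠ 0) :
    ∃ g : ℂ → ℂ, DifferentiableOn ℂ g (ball (0 : ℂ) 1 \ {0}) ∧
      ∀ w ∈ ball (0 : ℂ) 1 \ {0}, g w ^ 2 = f (w ^ 2) := by
  have hO : IsOpen {u : ℂ | u.re < 0} := isOpen_lt Complex.continuous_re continuous_const
  have hC : Convex ℝ {u : ℂ | u.re < 0} := convex_halfSpace_re_lt 0
  have hmem : ∀ u : ℂ, u.re < 0 → Complex.exp u ∈ ball (0 : ℂ) 1 \ {0} := by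
    intro u hu
    simp [Complex.norm_exp, hu]
  obtain ⟨L, hLd, hL⟩ := aux_lift (fun u => f (Complex.exp u))
    (hf.comp Complex.differentiable_exp.differentiableOn hmem) (fun u hu => hne _ (hmem u hu))
  have hper : ∀ n : ℤ, ∃ c : ℂ, Complex.exp c = 1 ∧
      ∀ u : ℂ, u.re < 0 → L (u + n * (2 * Real.pi * Complex.I)) = L u + c := by
    intro n
    set p : ℂ := n * (2 * Real.pi * Complex.I) with hp
    have hre : ∀ u : ℂ, u.re < 0 → (u + p).re < 0 := by
      intro u hu; simpa [hp] using hu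
    have hexp : ∀ u : ℂ, u.re < 0 → Complex.exp (L (u + p) - L u) = 1 := by
      intro u hu
      rw [Complex.exp_sub, hL _ (hre u hu), hL u hu, Complex.exp_add,
        Complex.exp_int_mul_two_pi_mul_I, mul_one, div_self (hne _ (hmem u hu))]
    have hda : ∀ u : ℂ, u.re < 0 → DifferentiableAt ℂ (fun u => L (u + p) - L u) u := by
      intro u hu
      exact ((hLd _ (hre u hu)).comp u (by fun_prop)).sub (hLd u hu)
    obtain ⟨c, hc⟩ := hO.exists_is_const_of_deriv_eq_zero hC.isPreconnected
      (fun u hu => (hda u hu).differentiableWithinAt) (fun u hu => by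
        have h1 := (hda u hu).hasDerivAt.cexp
        have h2 : HasDerivAt (fun u => Complex.exp (L (u + p) - L u)) 0 u := by
          refine (hasDerivAt_const u (1 : ℂ)).congr_of_eventuallyEq ?_
          filter_upwards [hO.mem_nhds hu] with v hv using hexp v hv
        have h3 := h1.unique h2
        simpa [hexp u hu] using h3)
    refine ⟨c, ?_, fun u hu => ?_⟩
    · rw [← hc (-1) (by simp)]
      exact hexp _ (by simp)
    · rw [← hc u hu]; ring
  have key : ∀ u v : ℂ, u.re < 0 → Complex.exp v = Complex.exp u →
      Complex.exp (L (2 * v) / 2) = Complex.exp (L (2 * u) / 2) := by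
    intro u v hu h
    obtain ⟨n, rfl⟩ := Complex.exp_eq_exp_iff_exists_int.1 h
    obtain ⟨c, hc1, hc⟩ := hper n
    have e : 2 * (u + n * (2 * Real.pi * Complex.I)) = (2 * u + n * (2 * Real.pi * Complex.I))
      + n * (2 * Real.pi * Complex.I) := by ring
    rw [e, hc _ (by simpa using (by linarith : 2 * u.re < 0)), hc _ (by simpa using (by linarith : 2 * u.re < 0)),
      show (L (2 * u) + c + c) / 2 = L (2 * u) / 2 + c by ring, Complex.exp_add, hc1, mul_one]
  have hlog : ∀ w ∈ ball (0 : ℂ) 1 \ {0}, (Complex.log w).re < 0 := by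
    rintro w ⟨hw, hw0⟩
    rw [Complex.log_re]
    exact Real.log_neg (norm_pos_iff.2 hw0) (by simpa using hw)
  refine ⟨fun w => Complex.exp (L (2 * Complex.log w) / 2), fun w hw => ?_, fun w hw => ?_⟩
  · have hw0 : w ≠ 0 := hw.2
    have hl := hlog w hw
    have hld : DifferentiableAt ℂ (fun z => Complex.log (z / w) + Complex.log w) w := by
      refine (DifferentiableAt.clog (by fun_prop) ?_).add_const _
      rw [div_self hw0]; simp
    have hd : DifferentiableAt ℂ
        (fun z => Complex.exp (L (2 * (Complex.log (z / w) + Complex.log w)) / 2)) w := by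
      refine (DifferentiableAt.div_const ?_ 2).cexp
      refine DifferentiableAt.comp (g := L) w (hLd _ ?_) (hld.const_mul 2)
      simpa [div_self hw0] using (by linarith : 2 * (Complex.log w).re < 0)
    refine (hd.differentiableWithinAt).congr (fun z hz => ?_) (by simp [div_self hw0])
    have hz0 : z ≠ 0 := hz.2
    refine (key _ _ (hlog z hz) ?_).symm
    rw [Complex.exp_add, Complex.exp_log (div_ne_zero hz0 hw0), Complex.exp_log hw0,
      Complex.exp_log hz0, div_mul_cancel₀ _ hw0]
  · have hw0 : w ≠ 0 := hw.2
    have hl := hlog w hw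
    change Complex.exp (L (2 * Complex.log w) / 2) ^ 2 = _
    rw [← Complex.exp_nat_mul, Nat.cast_ofNat, mul_div_cancel₀ _ two_ne_zero,
      hL _ (by simpa using (by linarith : 2 * (Complex.log w).re < 0)), two_mul, Complex.exp_add, Complex.exp_log hw0, sq]
end

section
/- Let f : ℂ → ℂ be holomorphic and nowhere vanishing on the punctured open unit disk D \ {0}, and suppose that for some r ∈ (0,1) the winding number (1/(2πi)) ∮_{|z|=r} f′(z)/f(z) dz is an even integer. Then there exists a holomorphic function g on D \ {0} with g(z)² = f(z) for all z ∈ D \ {0}. -/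
open Metric

/-- Square-root lifting criterion: a nowhere-zero holomorphic function on the punctured
unit disk whose winding number `(1/(2πi)) ∮_{|z|=r} f'/f` is an even integer admits a
holomorphic square root on the punctured disk. -/
theorem exists_holomorphic_sqrt_of_even_winding (f : ℂ → ℂ)
    (hf : DifferentiableOn ℂ f (ball (0 : ℂ) 1 \ {0}))
    (hne : ∀ z ∈ ball (0 : ℂ) 1 \ {0}, f z ≠ 0)
    (r : ℝ) (hr : r ∈ Set.Ioo (0 : ℝ) 1)
    (heven : ∃ n : ℤ,
      (∮ z in C(0, r), deriv f z / f z) = 2 * Real.pi * Complex.I * (2 * (n : ℂ))) :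
    ∃ g : ℂ → ℂ, DifferentiableOn ℂ g (ball (0 : ℂ) 1 \ {0}) ∧
      ∀ z ∈ ball (0 : ℂ) 1 \ {0}, g z ^ 2 = f z := by
  obtain ⟨n, hn⟩ := heven
  have hUo : IsOpen (ball (0 : ℂ) 1 \ {0}) := isOpen_ball.sdiff isClosed_singleton
  set U := ball (0 : ℂ) 1 \ {0} with hU
  set W : Set ℂ := {w | w.re < 0} with hW
  have hWo : IsOpen W := isOpen_lt Complex.continuous_re continuous_const
  have hWc : Convex ℝ W := convex_halfSpace_re_lt 0
  have hexp : ∀ w ∈ W, Complex.exp w ∈ U := by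
    intro w hw
    refine ⟨?_, Complex.exp_ne_zero w⟩
    rw [mem_ball_zero_iff, Complex.norm_exp]
    exact Real.exp_lt_one_iff.2 hw
  have hlog : ∀ z ∈ U, Complex.log z ∈ W := by
    intro z hz
    have h1 : ‖z‖ < 1 := mem_ball_zero_iff.1 hz.1
    have h2 : 0 < ‖z‖ := norm_pos_iff.2 hz.2
    change (Complex.log z).re < 0
    rw [Complex.log_re]
    exact Real.log_neg h2 h1
  have hk : DifferentiableOn ℂ
      (fun w => deriv f (Complex.exp w) / f (Complex.exp w) * Complex.exp w) W := by
    have hd : DifferentiableOn ℂ (fun z => deriv f z / f z) U := (hf.deriv hUo).div hf hne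
    exact (hd.comp Complex.differentiable_exp.differentiableOn hexp).mul
      Complex.differentiable_exp.differentiableOn
  obtain ⟨F, hF'⟩ := hWc.exists_forall_hasDerivWithinAt hk
  have hF : ∀ w ∈ W, HasDerivAt F
      (deriv f (Complex.exp w) / f (Complex.exp w) * Complex.exp w) w :=
    fun w hw => (hF' w hw).hasDerivAt (hWo.mem_nhds hw)
  have hfe : ∀ w ∈ W, HasDerivAt (fun w => f (Complex.exp w))
      (deriv f (Complex.exp w) * Complex.exp w) w := by
    intro w hw
    have := (hf.differentiableAt (hUo.mem_nhds (hexp w hw))).hasDerivAt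
    exact this.comp w (Complex.hasDerivAt_exp w)
  have hA : ∀ w ∈ W, HasDerivAt (fun w => f (Complex.exp w) * Complex.exp (-F w)) 0 w := by
    intro w hw
    have h0 := hne _ (hexp w hw)
    refine ((hfe w hw).mul (hF w hw).neg.cexp).congr_deriv ?_
    field_simp
    ring
  obtain ⟨a, ha⟩ := hWo.exists_is_const_of_deriv_eq_zero hWc.isPreconnected
    (fun w hw => (hA w hw).differentiableAt.differentiableWithinAt) (fun w hw => (hA w hw).deriv)
  have hfa : ∀ w ∈ W, f (Complex.exp w) = a * Complex.exp (F w) := by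
    intro w hw
    rw [← ha w hw, mul_assoc, ← Complex.exp_add]
    simp
  obtain ⟨c, hc⟩ : ∃ c : ℂ, c ^ 2 = a :=
    IsAlgClosed.exists_pow_nat_eq a two_pos
  -- period
  have hWadd : ∀ w : ℂ, (w + 2 * Real.pi * Complex.I) ∈ W ↔ w ∈ W := by
    intro w
    simp [hW]
  have hP : ∀ w ∈ W, HasDerivAt (fun w => F (w + 2 * Real.pi * Complex.I) - F w) 0 w := by
    intro w hw
    refine (((hF _ ((hWadd w).2 hw)).comp_add_const w _).sub (hF w hw)).congr_deriv ?_
    rw [Complex.exp_periodic w, sub_self]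
  obtain ⟨K, hK⟩ := hWo.exists_is_const_of_deriv_eq_zero hWc.isPreconnected
    (fun w hw => (hP w hw).differentiableAt.differentiableWithinAt) (fun w hw => (hP w hw).deriv)
  have hKn : K = 2 * Real.pi * Complex.I * (2 * (n : ℂ)) := by
    rw [← hn]
    have hmem : ∀ t : ℝ, ((Real.log r : ℂ) + t * Complex.I) ∈ W := by
      intro t
      simpa [hW] using Real.log_neg hr.1 hr.2
    have hcm : ∀ t : ℝ, Complex.exp ((Real.log r : ℂ) + t * Complex.I) = circleMap 0 r t := by
      intro t
      rw [Complex.exp_add, ← Complex.ofReal_exp, Real.exp_log hr.1]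
      simp [circleMap]
    have hder : ∀ t : ℝ, HasDerivAt (fun t : ℝ => F ((Real.log r : ℂ) + t * Complex.I))
        (deriv (circleMap 0 r) t • (deriv f (circleMap 0 r t) / f (circleMap 0 r t))) t := by
      intro t
      have h1 : HasDerivAt (fun t : ℝ => (Real.log r : ℂ) + t * Complex.I) Complex.I t := by
        simpa using ((Complex.ofRealCLM.hasDerivAt (x := t)).mul_const Complex.I).const_add
          (Real.log r : ℂ)
      refine ((hF _ (hmem t)).comp t h1).congr_deriv ?_
      rw [hcm, deriv_circleMap, smul_eq_mul]
      ring
    have hci : CircleIntegrable (fun z => deriv f z / f z) 0 r := by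
      refine ContinuousOn.circleIntegrable hr.1.le ?_
      refine (((hf.deriv hUo).div hf hne).continuousOn).mono ?_
      intro z hz
      have hz' : ‖z‖ = r := by simpa using hz
      refine ⟨by rw [mem_ball_zero_iff, hz']; exact hr.2, ?_⟩
      intro h0
      rw [Set.mem_singleton_iff.1 h0, norm_zero] at hz'
      exact hr.1.ne hz'
    rw [circleIntegral, intervalIntegral.integral_eq_sub_of_hasDerivAt (fun t _ => hder t) hci.out]
    rw [← hK _ (hmem 0)]
    simp
  classical
  set G : ℂ → ℂ := fun w => if w ∈ W then c * Complex.exp (F w / 2) else 0 with hG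
  have hGp : Function.Periodic G (2 * Real.pi * Complex.I) := by
    intro w
    by_cases hw : w ∈ W
    · have h2 : F (w + 2 * Real.pi * Complex.I) / 2 = F w / 2 + n * (2 * Real.pi * Complex.I) := by
        have := hK w hw
        rw [hKn] at this
        linear_combination this / 2
      simp only [hG, hWadd, hw, if_true]
      rw [h2, Complex.exp_periodic.int_mul n]
    · simp only [hG, hWadd, hw, if_false]
  have hGd : ∀ w ∈ W, DifferentiableAt ℂ G w := by
    intro w hw
    have : DifferentiableAt ℂ (fun w => c * Complex.exp (F w / 2)) w :=
      (((hF w hw).differentiableAt.div_const 2).cexp).const_mul c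
    refine this.congr_of_eventuallyEq ?_
    filter_upwards [hWo.mem_nhds hw] with v hv
    simp [hG, hv]
  refine ⟨fun z => G (Complex.log z), ?_, ?_⟩
  · intro z₀ hz₀
    have h0 : z₀ ≠ 0 := hz₀.2
    refine DifferentiableAt.differentiableWithinAt ?_
    have h1 : DifferentiableAt ℂ (fun z => Complex.log z₀ + Complex.log (z / z₀)) z₀ := by
      refine DifferentiableAt.const_add _ ?_
      refine (differentiableAt_id.div_const z₀).clog ?_
      simp [h0]
    have h2 : DifferentiableAt ℂ (fun z => G (Complex.log z₀ + Complex.log (z / z₀))) z₀ := by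
      refine DifferentiableAt.comp z₀ (g := G) ?_ h1
      simpa [h0] using hGd _ (hlog z₀ hz₀)
    refine h2.congr_of_eventuallyEq ?_
    filter_upwards [hUo.mem_nhds hz₀] with z hz
    have hz0 : z ≠ 0 := hz.2
    have : Complex.exp (Complex.log z) = Complex.exp (Complex.log z₀ + Complex.log (z / z₀)) := by
      rw [Complex.exp_add, Complex.exp_log hz0, Complex.exp_log h0,
        Complex.exp_log (div_ne_zero hz0 h0)]
      field_simp
    obtain ⟨m, hm⟩ := Complex.exp_eq_exp_iff_exists_int.1 this
    rw [hm]
    exact hGp.int_mul m _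
  · intro z hz
    have hl := hlog z hz
    simp only [hG, hl, if_true]
    rw [mul_pow, hc, ← Complex.exp_nat_mul]
    have := hfa _ hl
    rw [Complex.exp_log hz.2] at this
    rw [this]
    congr 2
    push_cast
    ring
end

section
/- Let Φ : ℂ → ℂ be holomorphic on the open unit disk D. Then there exists a map ν : ℂ → ℂ, real-differentiable on D, such that for all z ∈ D: ∂_z̄ ν(z) = 1, ∂_z ν(z) = −Φ(z)/4, and ν is harmonic (Δν = 0) on D; here ∂_z = ½(∂_x − i ∂_y) and ∂_z̄ = ½(∂_x + i ∂_y) are the Wirtinger derivatives. Consequently the Hopf function of ν, namely Φ_ν := 4 (∂_z ν)(∂_z ν̄) where ν̄ denotes the pointwise complex conjugate of ν, satisfies Φ_ν = −Φ on D. Explicitly one may take ν(z) = z̄ + Ψ(z), where Ψ is a holomorphic primitive of −Φ/4 on D. -/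
open Metric

/-- The partial derivative `∂_x g` of a map `g : ℂ → ℂ`, viewed via the real Fréchet
derivative. -/
noncomputable def pdx (g : ℂ → ℂ) (z : ℂ) : ℂ := fderiv ℝ g z 1

/-- The partial derivative `∂_y g` of a map `g : ℂ → ℂ`, viewed via the real Fréchet
derivative. -/
noncomputable def pdy (g : ℂ → ℂ) (z : ℂ) : ℂ := fderiv ℝ g z Complex.I

/-- The Wirtinger derivative `∂_z g = ½(∂_x g − i ∂_y g)`. -/
noncomputable def wirtingerZ (g : ℂ → ℂ) (z : ℂ) : ℂ :=
  (pdx g z - Complex.I * pdy g z) / 2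

/-- The Wirtinger derivative `∂_z̄ g = ½(∂_x g + i ∂_y g)`. -/
noncomputable def wirtingerZBar (g : ℂ → ℂ) (z : ℂ) : ℂ :=
  (pdx g z + Complex.I * pdy g z) / 2

/-- Construction of the auxiliary map `ν` in the conformal suspension lemma: given `Φ`
holomorphic on the unit disk, there is a real-differentiable harmonic map `ν` with
`∂_z̄ ν = 1` and `∂_z ν = −Φ/4`, whose Hopf function `Φ_ν = 4 (∂_z ν)(∂_z ν̄)` equals
`−Φ`; explicitly `ν(z) = z̄ + Ψ(z)` for a holomorphic primitive `Ψ` of `−Φ/4`. -/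
theorem exists_conformal_suspension_aux (Φ : ℂ → ℂ)
    (hΦ : DifferentiableOn ℂ Φ (ball (0 : ℂ) 1)) :
    ∃ ν : ℂ → ℂ, DifferentiableOn ℝ ν (ball (0 : ℂ) 1) ∧
      (∀ z ∈ ball (0 : ℂ) 1, wirtingerZBar ν z = 1) ∧
      (∀ z ∈ ball (0 : ℂ) 1, wirtingerZ ν z = -Φ z / 4) ∧
      (∀ z ∈ ball (0 : ℂ) 1, pdx (pdx ν) z + pdy (pdy ν) z = 0) ∧
      (∀ z ∈ ball (0 : ℂ) 1,
        4 * wirtingerZ ν z * wirtingerZ (fun w => (starRingEnd ℂ) (ν w)) z = -Φ z) ∧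
      ∃ Ψ : ℂ → ℂ, DifferentiableOn ℂ Ψ (ball (0 : ℂ) 1) ∧
        (∀ z ∈ ball (0 : ℂ) 1, HasDerivAt Ψ (-Φ z / 4) z) ∧
        ∀ z ∈ ball (0 : ℂ) 1, ν z = (starRingEnd ℂ) z + Ψ z := by
  have hφ : DifferentiableOn ℂ (fun z => -Φ z / 4) (ball (0 : ℂ) 1) :=
    hΦ.neg.div_const 4
  obtain ⟨Ψ, hΨ⟩ := hφ.isExactOn_ball
  have hF : ∀ z ∈ ball (0 : ℂ) 1, HasFDerivAt (fun w => (starRingEnd ℂ) w + Ψ w)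
      ((Complex.conjCLE : ℂ →L[ℝ] ℂ) +
        (ContinuousLinearMap.toSpanSingleton ℂ (-Φ z / 4)).restrictScalars ℝ) z := by
    intro z hz
    have h1 : HasFDerivAt (fun w : ℂ => (starRingEnd ℂ) w) (Complex.conjCLE : ℂ →L[ℝ] ℂ) z :=
      Complex.conjCLE.hasFDerivAt
    exact h1.add ((hΨ z hz).hasFDerivAt.restrictScalars ℝ)
  have hx : ∀ z ∈ ball (0 : ℂ) 1,
      pdx (fun w => (starRingEnd ℂ) w + Ψ w) z = 1 + -Φ z / 4 := by
    intro z hz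
    rw [pdx, (hF z hz).fderiv]
    simp
  have hy : ∀ z ∈ ball (0 : ℂ) 1,
      pdy (fun w => (starRingEnd ℂ) w + Ψ w) z = -Complex.I + Complex.I * (-Φ z / 4) := by
    intro z hz
    rw [pdy, (hF z hz).fderiv]
    simp
  have hZ : ∀ z ∈ ball (0 : ℂ) 1,
      wirtingerZ (fun w => (starRingEnd ℂ) w + Ψ w) z = -Φ z / 4 := by
    intro z hz
    rw [wirtingerZ, hx z hz, hy z hz]
    linear_combination (1 / 2 + Φ z / 8) * Complex.I_mul_I
  refine ⟨fun w => (starRingEnd ℂ) w + Ψ w, ?_, ?_, hZ, ?_, ?_, Ψ, ?_, hΨ, fun _ _ => rfl⟩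
  · exact fun z hz => (hF z hz).differentiableAt.differentiableWithinAt
  · intro z hz
    rw [wirtingerZBar, hx z hz, hy z hz]
    linear_combination (-1 / 2 - Φ z / 8) * Complex.I_mul_I
  · intro z hz
    have hnhds := isOpen_ball.mem_nhds hz
    have hd : HasDerivAt (fun z => -Φ z / 4) (deriv (fun z => -Φ z / 4) z) z :=
      (hφ.differentiableAt hnhds).hasDerivAt
    have ex : pdx (fun w => (starRingEnd ℂ) w + Ψ w) =ᶠ[nhds z] fun z => 1 + -Φ z / 4 := by
      filter_upwards [hnhds] with w hw using hx w hw
    have ey : pdy (fun w => (starRingEnd ℂ) w + Ψ w) =ᶠ[nhds z]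
        fun z => -Complex.I + Complex.I * (-Φ z / 4) := by
      filter_upwards [hnhds] with w hw using hy w hw
    have dx := ((hd.const_add 1).hasFDerivAt.restrictScalars ℝ).fderiv
    have dy := (((hd.const_mul Complex.I).const_add (-Complex.I)).hasFDerivAt.restrictScalars
      ℝ).fderiv
    rw [pdx, pdy, ex.fderiv_eq, ey.fderiv_eq, dx, dy]
    simp only [ContinuousLinearMap.coe_restrictScalars',
      ContinuousLinearMap.toSpanSingleton_apply, smul_eq_mul]
    linear_combination (deriv (fun z => -Φ z / 4) z) * Complex.I_mul_I
  · intro z hz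
    have hc := (Complex.conjCLE.hasFDerivAt (x := (starRingEnd ℂ) z + Ψ z)).comp z (hF z hz)
    have h1 : wirtingerZ (fun w => (starRingEnd ℂ) ((starRingEnd ℂ) w + Ψ w)) z = 1 := by
      have hc' : fderiv ℝ (fun w => (starRingEnd ℂ) ((starRingEnd ℂ) w + Ψ w)) z = _ := hc.fderiv
      rw [wirtingerZ, pdx, pdy, hc']
      have h4 : (starRingEnd ℂ) (4 : ℂ) = 4 := Complex.conj_ofNat 4
      simp [h4]
      linear_combination (-1 / 2 - (starRingEnd ℂ) (Φ z) / 8) * Complex.I_mul_I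
    rw [hZ z hz, h1]
    ring
  · exact fun z hz => (hΨ z hz).differentiableAt.differentiableWithinAt
end

section
/- Let r > 0 and let w : ℝ² → [0, ∞) be continuous on the closed disk {x : |x| ≤ r}. Then there exist σ₀ ∈ (0, r] and a point x₀ with |x₀| ≤ r − σ₀ such that: (i) σ₀² · sup_{|x| ≤ r − σ₀} w = max_{σ ∈ [0, r]} ( σ² · sup_{|x| ≤ r − σ} w ); (ii) w(x₀) ≥ ½ sup_{|x| ≤ r − σ₀} w; and (iii) sup_{|x − x₀| ≤ σ₀/2} w(x) ≤ 8 w(x₀). -/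
open Metric

/-- Choi–Schoen point selection: for a nonnegative function `w` continuous on the closed
disk of radius `r`, there is a scale `σ₀ ∈ (0, r]` maximizing `σ² sup_{|x| ≤ r−σ} w`
over `σ ∈ [0, r]` and a point `x₀` with `|x₀| ≤ r − σ₀`, `w(x₀) ≥ ½ sup_{|x| ≤ r−σ₀} w`,
and `sup_{|x−x₀| ≤ σ₀/2} w ≤ 8 w(x₀)`. -/
theorem choi_schoen_point_selection (r : ℝ) (hr : 0 < r)
    (w : EuclideanSpace ℝ (Fin 2) → ℝ) (hw0 : ∀ x, 0 ≤ w x)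
    (hw : ContinuousOn w (closedBall (0 : EuclideanSpace ℝ (Fin 2)) r)) :
    ∃ σ₀ ∈ Set.Ioc (0 : ℝ) r, ∃ x₀ : EuclideanSpace ℝ (Fin 2),
      ‖x₀‖ ≤ r - σ₀ ∧
      (∀ σ ∈ Set.Icc (0 : ℝ) r,
        σ ^ 2 * sSup (w '' closedBall (0 : EuclideanSpace ℝ (Fin 2)) (r - σ)) ≤
          σ₀ ^ 2 * sSup (w '' closedBall (0 : EuclideanSpace ℝ (Fin 2)) (r - σ₀))) ∧
      (1 / 2) * sSup (w '' closedBall (0 : EuclideanSpace ℝ (Fin 2)) (r - σ₀)) ≤ w x₀ ∧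
      ∀ x : EuclideanSpace ℝ (Fin 2), dist x x₀ ≤ σ₀ / 2 → w x ≤ 8 * w x₀ := by
  have hmax : ∃ z : EuclideanSpace ℝ (Fin 2), ‖z‖ < r ∧
      ∀ y, ‖y‖ ≤ r → (r - ‖y‖) ^ 2 * w y ≤ (r - ‖z‖) ^ 2 * w z := by
    have hc : ContinuousOn (fun y : EuclideanSpace ℝ (Fin 2) => (r - ‖y‖) ^ 2 * w y)
        (closedBall 0 r) := by
      apply ContinuousOn.mul _ hw
      fun_prop
    obtain ⟨z, hz, hm⟩ := (isCompact_closedBall (0 : EuclideanSpace ℝ (Fin 2)) r).exists_isMaxOn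
      ⟨0, by simp [hr.le]⟩ hc
    have hm' : ∀ y, ‖y‖ ≤ r → (r - ‖y‖) ^ 2 * w y ≤ (r - ‖z‖) ^ 2 * w z := by
      intro y hy
      exact hm (by simpa using hy)
    have hz' : ‖z‖ ≤ r := by simpa using hz
    rcases hz'.lt_or_eq with h | h
    · exact ⟨z, h, hm'⟩
    · refine ⟨0, by simpa using hr, fun y hy => (hm' y hy).trans ?_⟩
      rw [h]
      have := mul_nonneg (sq_nonneg (r - ‖(0 : EuclideanSpace ℝ (Fin 2))‖)) (hw0 0)
      simpa using this
  obtain ⟨z, hz, hm⟩ := hmax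
  have hpos : 0 < r - ‖z‖ := by linarith
  have hz0 := norm_nonneg z
  have key : ∀ σ, 0 < σ → ∀ y, ‖y‖ ≤ r - σ → σ ^ 2 * w y ≤ (r - ‖z‖) ^ 2 * w z := by
    intro σ hσ y hy
    refine le_trans ?_ (hm y (by linarith))
    apply mul_le_mul_of_nonneg_right _ (hw0 y)
    apply pow_le_pow_left₀ hσ.le
    linarith
  have hb : ∀ v ∈ w '' closedBall (0 : EuclideanSpace ℝ (Fin 2)) (r - (r - ‖z‖)), v ≤ w z := by
    rintro _ ⟨y, hy, rfl⟩
    exact le_of_mul_le_mul_left (key _ hpos y (by simpa using hy)) (pow_pos hpos 2)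
  have hzm : w z ∈ w '' closedBall (0 : EuclideanSpace ℝ (Fin 2)) (r - (r - ‖z‖)) :=
    ⟨z, by simp, rfl⟩
  have hs : sSup (w '' closedBall (0 : EuclideanSpace ℝ (Fin 2)) (r - (r - ‖z‖))) = w z :=
    le_antisymm (csSup_le ⟨_, hzm⟩ hb) (le_csSup ⟨_, hb⟩ hzm)
  refine ⟨r - ‖z‖, ⟨hpos, by linarith⟩, z, by linarith, ?_, ?_, ?_⟩
  · intro σ hσ
    rw [hs]
    rcases hσ.1.eq_or_lt with h | h
    · rw [← h]
      have := mul_nonneg (sq_nonneg (r - ‖z‖)) (hw0 z)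
      simpa using this
    · rw [mul_comm, ← le_div_iff₀ (pow_pos h 2)]
      apply csSup_le
      · exact ⟨w 0, 0, by simpa using hσ.2, rfl⟩
      · rintro _ ⟨y, hy, rfl⟩
        rw [le_div_iff₀ (pow_pos h 2), mul_comm]
        exact key σ h y (by simpa using hy)
  · rw [hs]
    linarith [hw0 z]
  · intro x hx
    have h1 : ‖x‖ ≤ r - (r - ‖z‖) / 2 := by
      have := norm_le_norm_add_norm_sub' x z
      rw [dist_eq_norm] at hx
      linarith
    have h2 := key _ (half_pos hpos) x h1
    have h3 : (r - ‖z‖) ^ 2 * w x ≤ (r - ‖z‖) ^ 2 * (4 * w z) := by linarith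
    have h4 := le_of_mul_le_mul_left h3 (pow_pos hpos 2)
    linarith [hw0 z]
end
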